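/- arXiv:1412.4284 — 4 statements merged into one kernel-verified Lean document; each statement's English description precedes it below -/
import Mathlib

section
/- For the continued fraction system associated to a finite alphabet A ⊂ ℕ with |A| ≥ 2, the distortion function τ = log|T'| has the non local integrability property: there exist an index j₀ ∈ A×A, two sequences ξ, η : ℕ → A×A, and points u₀, v₀ ∈ K ∩ I_{j₀}, such that the partial derivative ∂φ_{ξ,η}/∂u (u₀, v₀) is nonzero, where φ_{ξ,η}(u,v) = Δ_ξ(u,v) − Δ_η(u,v) and Δ_ξ(u,v) = Σ_{i=0}^{∞} [τ(γ_{ξ_i} ∘ γ_{ξ_{i−1}} ∘ ⋯ ∘ γ_{ξ_0}(u)) − τ(γ_{ξ_i} ∘ γ_{ξ_{i−1}} ∘ ⋯ ∘ γ_{ξ_0}(v))] (these series converge and define C¹ functions on I_{j₀} × I_{j₀}). -/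
/-- The Möbius map of `g_a = [[0,1],[1,a]]` on `ℝ`: `x ↦ 1/(x+a)`. -/
noncomputable def gmap (a : ℕ) (x : ℝ) : ℝ := 1 / (x + (a : ℝ))

/-- The Möbius map `γ_j` of `g_a g_{a'}` for `j = (a,a')`: `x ↦ g_a(g_{a'}(x))`. -/
noncomputable def gam (j : ℕ × ℕ) (x : ℝ) : ℝ := gmap j.1 (gmap j.2 x)

/-- The interval `I_j = γ_j([1/(A_max+1), 1])`, where `A_max = max A` (here `A.sup id`). -/
noncomputable def Ij (A : Finset ℕ) (j : ℕ × ℕ) : Set ℝ :=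
  gam j '' Set.Icc (1 / (((A.sup id : ℕ) : ℝ) + 1)) 1

/-- `I = ⋃_{j ∈ A×A} I_j`. -/
noncomputable def IA (A : Finset ℕ) : Set ℝ :=
  ⋃ j ∈ (A ×ˢ A : Finset (ℕ × ℕ)), Ij A j

open Classical in
/-- The expanding Markov map `T : I → ℝ`, given on `I_j`, `j = (a,a')`, by the inverse
branch `T = γ_j⁻¹ : x ↦ 1/(1/x − a) − a'` (and defined as `0` off `I`). -/
noncomputable def Tmap (A : Finset ℕ) (x : ℝ) : ℝ :=
  if h : ∃ j : ℕ × ℕ, j ∈ A ×ˢ A ∧ x ∈ Ij A j then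
    1 / (1 / x - (h.choose.1 : ℝ)) - (h.choose.2 : ℝ)
  else 0

/-- The invariant Cantor set `K = ⋂_{i ≥ 0} T^{−i}(I)`. -/
noncomputable def KA (A : Finset ℕ) : Set ℝ :=
  ⋂ n : ℕ, (Tmap A)^[n] ⁻¹' IA A

open Classical in
/-- The distortion function `τ = log |T'|`. On `I_j`, `j = (a,a')`, the branch
`T = γ_j⁻¹` has `T'(x) = (1 − a x)⁻²`, so `τ(x) = log|T'(x)| = −2 log|1 − a x|`
(and `τ = 0` off `I`). -/
noncomputable def tauA (A : Finset ℕ) (x : ℝ) : ℝ :=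
  if h : ∃ j : ℕ × ℕ, j ∈ A ×ˢ A ∧ x ∈ Ij A j then
    -2 * Real.log |1 - (h.choose.1 : ℝ) * x|
  else 0

open Classical in
/-- `|T'|`: on `I_j`, `j = (a,a')`, the branch derivative of `T = γ_j⁻¹` in absolute
value, `|T'(x)| = (1 − a x)⁻²` (and `0` off `I`), so that by the chain rule
`|(T^N)'(z)| = ∏_{i<N} |T'(T^i z)|`. -/
noncomputable def TderivAbs (A : Finset ℕ) (x : ℝ) : ℝ :=
  if h : ∃ j : ℕ × ℕ, j ∈ A ×ˢ A ∧ x ∈ Ij A j then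
    ((1 - (h.choose.1 : ℝ) * x)⁻¹) ^ 2
  else 0

/-- The orbit `γ_{ξ_i} ∘ γ_{ξ_{i−1}} ∘ ⋯ ∘ γ_{ξ_0}(u)` of `u` under the inverse branches
determined by the sequence `ξ`. -/
noncomputable def branchOrbit (ξ : ℕ → ℕ × ℕ) (u : ℝ) : ℕ → ℝ
  | 0 => gam (ξ 0) u
  | n + 1 => gam (ξ (n + 1)) (branchOrbit ξ u n)

/-- `Δ_ξ(u,v) = Σ_{i≥0} [τ(γ_{ξ_i} ∘ ⋯ ∘ γ_{ξ_0}(u)) − τ(γ_{ξ_i} ∘ ⋯ ∘ γ_{ξ_0}(v))]`. -/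
noncomputable def DeltaFn (A : Finset ℕ) (ξ : ℕ → ℕ × ℕ) (u v : ℝ) : ℝ :=
  ∑' i : ℕ, (tauA A (branchOrbit ξ u i) - tauA A (branchOrbit ξ v i))

/-- The temporal distance function `φ_{ξ,η}(u,v) = Δ_ξ(u,v) − Δ_η(u,v)`. -/
noncomputable def phiFn (A : Finset ℕ) (ξ η : ℕ → ℕ × ℕ) (u v : ℝ) : ℝ :=
  DeltaFn A ξ u v - DeltaFn A η u v

/-!
Write `γ_j` for the Möbius map of `g_a g_b`, `j = (a, b)`. Its matrix has transpose `g_b g_a`, so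
pairing `(x, 1)` with `(κ', 1)` gives, for `κ = γ_{(b, a)}(κ')`, the duality
`(1 + κ' γ_j(x)) · D_j(x) = (1 + κ x) · D_{(b, a)}(κ')`, where `D_j = |γ_j'|^{-1/2}` is the
denominator of `γ_j`. As `τ ∘ γ_j = 2 log D_j`, this exhibits `τ` along an orbit as a coboundary up
to constants, and the series telescopes to
`Δ_ξ(u, v) = 2 log (1 + κ u) - 2 log (1 + κ v)`, where `κ` is the continued fraction whose partial
quotients are the digits of `ξ` read in order of application. Hence
`∂φ_{ξ,η}/∂u = 2 κ / (1 + κ u) - 2 μ / (1 + μ u)`, which vanishes only if `κ = μ`. Two distinct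
letters `a` and `b`, repeated forever, give distinct continued fractions, and `[0; a, a, a, …]`
is a point of `K`.
-/

open Set Filter Topology

theorem abs_log_sub_log_le {x y : ℝ} (hx : 1 ≤ x) (hy : 1 ≤ y) :
    |Real.log x - Real.log y| ≤ |x - y| := by
  wlog hxy : y ≤ x generalizing x y
  · rw [abs_sub_comm, abs_sub_comm x]
    exact this hy hx (le_of_not_ge hxy)
  have hy0 : 0 < y := by linarith
  have hx0 : 0 < x := by linarith
  rw [abs_of_nonneg (sub_nonneg.2 (Real.log_le_log hy0 hxy)), abs_of_nonneg (sub_nonneg.2 hxy)]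
  calc Real.log x - Real.log y = Real.log (x / y) := (Real.log_div hx0.ne' hy0.ne').symm
    _ ≤ x / y - 1 := Real.log_le_sub_one_of_pos (by positivity)
    _ = (x - y) / y := by field_simp
    _ ≤ x - y := div_le_self (sub_nonneg.2 hxy) hy

theorem abs_log_one_add_mul_sub_le {k x y : ℝ} (hk : k ∈ Icc 0 1) (hx : 0 ≤ x) (hy : 0 ≤ y) :
    |Real.log (1 + k * x) - Real.log (1 + k * y)| ≤ |x - y| := by
  have hk0 := hk.1
  calc |Real.log (1 + k * x) - Real.log (1 + k * y)|
      ≤ |(1 + k * x) - (1 + k * y)| :=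
        abs_log_sub_log_le (le_add_of_nonneg_right (by positivity))
          (le_add_of_nonneg_right (by positivity))
    _ = k * |x - y| := by rw [add_sub_add_left_eq_sub, ← mul_sub, abs_mul, abs_of_nonneg hk0]
    _ ≤ |x - y| := mul_le_of_le_one_left (abs_nonneg _) hk.2

theorem div_one_add_mul_eq_div_one_add_mul_iff {k m x : ℝ} (hk : 1 + k * x ≠ 0)
    (hm : 1 + m * x ≠ 0) : k / (1 + k * x) = m / (1 + m * x) ↔ k = m := by
  rw [div_eq_div_iff hk hm]
  constructor <;> intro h <;> linarith

theorem injOn_uncurry_gmap : InjOn (Function.uncurry gmap) (univ ×ˢ Ioc 0 1) := by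
  rintro ⟨a, x⟩ ⟨-, hx0, hx1⟩ ⟨b, y⟩ ⟨-, hy0, hy1⟩ h
  have h_add : x + a = y + b := by simpa [Function.uncurry, gmap] using h
  have hab : a < b + 1 := by exact_mod_cast (by linarith : (a : ℝ) < b + 1)
  have hba : b < a + 1 := by exact_mod_cast (by linarith : (b : ℝ) < a + 1)
  obtain rfl : a = b := by omega
  simpa using h_add

theorem gmap_lt_one {a : ℕ} (ha : 1 ≤ a) {x : ℝ} (hx : 0 < x) : gmap a x < 1 := by
  have ha' : (1 : ℝ) ≤ a := by exact_mod_cast ha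
  rw [gmap, div_lt_one (by positivity)]
  linarith

/-- The denominator `c x + d` of `γ_j`, for `(c, d)` the bottom row of
`g_a g_b = [[1, b], [a, ab + 1]]`, `j = (a, b)`. -/
noncomputable def gamDenom (j : ℕ × ℕ) (x : ℝ) : ℝ := j.1 * (x + j.2) + 1

theorem gamDenom_pos (j : ℕ × ℕ) {x : ℝ} (hx : 0 ≤ x) : 0 < gamDenom j x := by
  unfold gamDenom; positivity

theorem two_le_gamDenom {j : ℕ × ℕ} (h₁ : 1 ≤ j.1) (h₂ : 1 ≤ j.2) {x : ℝ} (hx : 0 ≤ x) :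
    2 ≤ gamDenom j x := by
  have h₁' : (1 : ℝ) ≤ j.1 := by exact_mod_cast h₁
  have h₂' : (1 : ℝ) ≤ j.2 := by exact_mod_cast h₂
  unfold gamDenom
  nlinarith

theorem gam_eq_div (j : ℕ × ℕ) {x : ℝ} (hx : 0 < x) :
    gam j x = (x + j.2) / gamDenom j x := by
  unfold gam gmap gamDenom
  field_simp
  ring

theorem one_sub_fst_mul_gam (j : ℕ × ℕ) {x : ℝ} (hx : 0 < x) :
    1 - j.1 * gam j x = (gamDenom j x)⁻¹ := by
  have hD := (gamDenom_pos j hx.le).ne'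
  rw [gam_eq_div j hx]
  field_simp
  unfold gamDenom
  ring

theorem gam_sub_gam (j : ℕ × ℕ) {x y : ℝ} (hx : 0 < x) (hy : 0 < y) :
    gam j x - gam j y = (x - y) / (gamDenom j x * gamDenom j y) := by
  have hDx := (gamDenom_pos j hx.le).ne'
  have hDy := (gamDenom_pos j hy.le).ne'
  rw [gam_eq_div j hx, gam_eq_div j hy]
  field_simp
  unfold gamDenom
  ring

theorem abs_gam_sub_gam_le {j : ℕ × ℕ} (h₁ : 1 ≤ j.1) (h₂ : 1 ≤ j.2) {x y : ℝ}
    (hx : 0 < x) (hy : 0 < y) : |gam j x - gam j y| ≤ |x - y| / 4 := by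
  have hDx := two_le_gamDenom h₁ h₂ hx.le
  have hDy := two_le_gamDenom h₁ h₂ hy.le
  rw [gam_sub_gam j hx hy, abs_div, abs_of_pos (a := _ * _) (by positivity)]
  gcongr
  nlinarith

theorem one_add_mul_gam_mul_gamDenom (j : ℕ × ℕ) {x κ : ℝ} (hx : 0 < x) (hκ : 0 < κ) :
    (1 + κ * gam j x) * gamDenom j x = (1 + gam j.swap κ * x) * gamDenom j.swap κ := by
  have hDx := (gamDenom_pos j hx.le).ne'
  have hDκ := (gamDenom_pos j.swap hκ.le).ne'
  rw [gam_eq_div j hx, gam_eq_div j.swap hκ]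
  field_simp
  simp only [gamDenom, Prod.fst_swap, Prod.snd_swap]
  ring

theorem log_gamDenom (j : ℕ × ℕ) {x κ : ℝ} (hx : 0 < x) (hκ : 0 < κ) :
    Real.log (gamDenom j x) = Real.log (1 + gam j.swap κ * x) - Real.log (1 + κ * gam j x)
      + Real.log (gamDenom j.swap κ) := by
  have hDx := gamDenom_pos j hx.le
  have hDκ := gamDenom_pos j.swap hκ.le
  have hγx : 0 < gam j x := by rw [gam_eq_div j hx]; positivity
  have hγκ : 0 < gam j.swap κ := by rw [gam_eq_div j.swap hκ]; positivity
  have h := congrArg Real.log (one_add_mul_gam_mul_gamDenom j hx hκ)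
  rw [Real.log_mul (by positivity) hDx.ne', Real.log_mul (by positivity) hDκ.ne'] at h
  linarith

section MarkovSystem

variable {A : Finset ℕ}

/-- The interval `[1/(A_max + 1), 1]` whose images under the maps `γ_j` are the `I_j`. -/
def baseInterval (A : Finset ℕ) : Set ℝ := Icc (1 / (((A.sup id : ℕ) : ℝ) + 1)) 1

theorem baseInterval_subset_Ioc : baseInterval A ⊆ Ioc 0 1 :=
  Icc_subset_Ioc (by positivity) le_rfl

theorem interior_baseInterval :
    interior (baseInterval A) = Ioo (1 / (((A.sup id : ℕ) : ℝ) + 1)) 1 :=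
  interior_Icc

theorem one_div_sup_add_one_le_gmap {a : ℕ} (ha : a ∈ A) {x : ℝ} (hx : x ∈ Ioc 0 1) :
    1 / (((A.sup id : ℕ) : ℝ) + 1) ≤ gmap a x := by
  have ha_le : (a : ℝ) ≤ (A.sup id : ℕ) := by exact_mod_cast Finset.le_sup (f := id) ha
  have hx0 := hx.1
  unfold gmap
  gcongr 1 / ?_
  linarith [hx.2]

theorem mapsTo_gmap (hA1 : ∀ a ∈ A, 1 ≤ a) {a : ℕ} (ha : a ∈ A) :
    MapsTo (gmap a) (baseInterval A) (baseInterval A) := fun _ hx =>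
  have hx := baseInterval_subset_Ioc hx
  ⟨one_div_sup_add_one_le_gmap ha hx, (gmap_lt_one (hA1 a ha) hx.1).le⟩

theorem mapsTo_gam (hA1 : ∀ a ∈ A, 1 ≤ a) {j : ℕ × ℕ} (hj : j ∈ A ×ˢ A) :
    MapsTo (gam j) (baseInterval A) (baseInterval A) :=
  (mapsTo_gmap hA1 (Finset.mem_product.1 hj).1).comp (mapsTo_gmap hA1 (Finset.mem_product.1 hj).2)

theorem pairwiseDisjoint_Ij (hA1 : ∀ a ∈ A, 1 ≤ a) :
    (↑(A ×ˢ A) : Set (ℕ × ℕ)).PairwiseDisjoint (Ij A) := by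
  intro j hj k hk hjk
  refine disjoint_left.2 ?_
  rintro _ ⟨y, hy, rfl⟩ ⟨z, hz, hzy⟩
  have hj₂ := (Finset.mem_product.1 (Finset.mem_coe.1 hj)).2
  have hk₂ := (Finset.mem_product.1 (Finset.mem_coe.1 hk)).2
  have hgy := baseInterval_subset_Ioc (mapsTo_gmap hA1 hj₂ hy)
  have hgz := baseInterval_subset_Ioc (mapsTo_gmap hA1 hk₂ hz)
  obtain ⟨h_fst, h_gmap⟩ := Prod.ext_iff.1 <|
    injOn_uncurry_gmap (x₁ := (k.1, gmap k.2 z)) (x₂ := (j.1, gmap j.2 y))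
      ⟨trivial, hgz⟩ ⟨trivial, hgy⟩ hzy
  obtain ⟨h_snd, -⟩ := Prod.ext_iff.1 <|
    injOn_uncurry_gmap (x₁ := (k.2, z)) (x₂ := (j.2, y))
      ⟨trivial, baseInterval_subset_Ioc hz⟩ ⟨trivial, baseInterval_subset_Ioc hy⟩ h_gmap
  exact hjk (Prod.ext h_fst.symm h_snd.symm)

theorem choose_eq_of_mem_Ij (hA1 : ∀ a ∈ A, 1 ≤ a) {j : ℕ × ℕ} (hj : j ∈ A ×ˢ A) {x : ℝ}
    (hx : x ∈ Ij A j) (h : ∃ k : ℕ × ℕ, k ∈ A ×ˢ A ∧ x ∈ Ij A k) : h.choose = j :=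
  (pairwiseDisjoint_Ij hA1).elim_set h.choose_spec.1 hj x h.choose_spec.2 hx

theorem Tmap_gam (hA1 : ∀ a ∈ A, 1 ≤ a) {j : ℕ × ℕ} (hj : j ∈ A ×ˢ A) {x : ℝ}
    (hx : x ∈ baseInterval A) : Tmap A (gam j x) = x := by
  have h_mem : gam j x ∈ Ij A j := mem_image_of_mem _ hx
  have h_ex : ∃ k : ℕ × ℕ, k ∈ A ×ˢ A ∧ gam j x ∈ Ij A k := ⟨j, hj, h_mem⟩
  rw [Tmap, dif_pos h_ex, choose_eq_of_mem_Ij hA1 hj h_mem h_ex]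
  simp [gam, gmap]

theorem tauA_gam (hA1 : ∀ a ∈ A, 1 ≤ a) {j : ℕ × ℕ} (hj : j ∈ A ×ˢ A) {x : ℝ}
    (hx : x ∈ baseInterval A) : tauA A (gam j x) = 2 * Real.log (gamDenom j x) := by
  have h_mem : gam j x ∈ Ij A j := mem_image_of_mem _ hx
  have h_ex : ∃ k : ℕ × ℕ, k ∈ A ×ˢ A ∧ gam j x ∈ Ij A k := ⟨j, hj, h_mem⟩
  rw [tauA, dif_pos h_ex, choose_eq_of_mem_Ij hA1 hj h_mem h_ex,
    one_sub_fst_mul_gam j (baseInterval_subset_Ioc hx).1, Real.log_abs, Real.log_inv]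
  ring

theorem mem_KA_of_gam_eq_self (hA1 : ∀ a ∈ A, 1 ≤ a) {j : ℕ × ℕ} (hj : j ∈ A ×ˢ A) {x : ℝ}
    (hx : x ∈ baseInterval A) (hfix : gam j x = x) : x ∈ KA A := by
  have hT : Function.IsFixedPt (Tmap A) x :=
    (congrArg (Tmap A) hfix.symm).trans (Tmap_gam hA1 hj hx)
  refine mem_iInter.2 fun n => ?_
  rw [mem_preimage, hT.iterate n]
  exact mem_biUnion hj ⟨x, hx, hfix⟩

theorem exists_gmap_eq_self (hA1 : ∀ a ∈ A, 1 ≤ a) {a : ℕ} (ha : a ∈ A) :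
    ∃ x ∈ baseInterval A, gmap a x = x := by
  refine exists_mem_Icc_isFixedPt_of_mapsTo ?_ ?_ (mapsTo_gmap hA1 ha)
  · refine continuousOn_const.div (by fun_prop) fun x hx => ?_
    have hx0 : 0 < x := (baseInterval_subset_Ioc hx).1
    positivity
  · exact (div_le_one (by positivity)).2 (by simp)

theorem mem_interior_baseInterval_of_gmap_eq_self (hA1 : ∀ a ∈ A, 1 ≤ a) {a : ℕ} (ha : a ∈ A)
    {x : ℝ} (hx : x ∈ baseInterval A) (hfix : gmap a x = x) : x ∈ interior (baseInterval A) := by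
  have ha_le : (a : ℝ) ≤ (A.sup id : ℕ) := by exact_mod_cast Finset.le_sup (f := id) ha
  have hx0 : 0 < x := (baseInterval_subset_Ioc hx).1
  have hx1 : x < 1 := hfix.symm.trans_lt (gmap_lt_one (hA1 a ha) hx0)
  refine interior_baseInterval.symm ▸ ⟨?_, hx1⟩
  rw [← hfix, gmap]
  exact one_div_lt_one_div_of_lt (by positivity) (by linarith)

end MarkovSystem

section TelescopingSeries

variable {A : Finset ℕ} {ξ η : ℕ → ℕ × ℕ} {κ μ : ℕ → ℝ} {u v : ℝ}

/-- The orbit of `u` under the inverse branches determined by `ξ`, starting at `u` itself;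
`branchOrbit` is its shift by one. -/
noncomputable def orbitFrom (ξ : ℕ → ℕ × ℕ) (u : ℝ) : ℕ → ℝ
  | 0 => u
  | n + 1 => gam (ξ n) (orbitFrom ξ u n)

theorem branchOrbit_eq_orbitFrom_succ (ξ : ℕ → ℕ × ℕ) (u : ℝ) (n : ℕ) :
    branchOrbit ξ u n = orbitFrom ξ u (n + 1) := by
  induction n with
  | zero => rfl
  | succ n ih => rw [branchOrbit, ih, ← orbitFrom]

theorem orbitFrom_mem_baseInterval (hA1 : ∀ a ∈ A, 1 ≤ a) (hξ : ∀ n, ξ n ∈ A ×ˢ A)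
    (hu : u ∈ baseInterval A) (n : ℕ) : orbitFrom ξ u n ∈ baseInterval A := by
  induction n with
  | zero => exact hu
  | succ n ih => exact mapsTo_gam hA1 (hξ n) ih

theorem abs_orbitFrom_sub_le (hA1 : ∀ a ∈ A, 1 ≤ a) (hξ : ∀ n, ξ n ∈ A ×ˢ A)
    (hu : u ∈ baseInterval A) (hv : v ∈ baseInterval A) (n : ℕ) :
    |orbitFrom ξ u n - orbitFrom ξ v n| ≤ |u - v| * (1 / 4) ^ n := by
  induction n with
  | zero => simp [orbitFrom]
  | succ n ih =>
    obtain ⟨h₁, h₂⟩ := Finset.mem_product.1 (hξ n)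
    have h_pos {w : ℝ} (hw : w ∈ baseInterval A) : 0 < orbitFrom ξ w n :=
      (baseInterval_subset_Ioc (orbitFrom_mem_baseInterval hA1 hξ hw n)).1
    calc |orbitFrom ξ u (n + 1) - orbitFrom ξ v (n + 1)|
        ≤ |orbitFrom ξ u n - orbitFrom ξ v n| / 4 :=
          abs_gam_sub_gam_le (hA1 _ h₁) (hA1 _ h₂) (h_pos hu) (h_pos hv)
      _ ≤ |u - v| * (1 / 4) ^ n / 4 := by gcongr
      _ = |u - v| * (1 / 4) ^ (n + 1) := by ring

/-- `κ n` is the continued fraction `[0; b_n, a_n, b_{n+1}, a_{n+1}, …]`, where `ξ i = (a_i, b_i)`,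
characterised by its recursion instead of as a limit. -/
def IsDualOrbit (ξ : ℕ → ℕ × ℕ) (κ : ℕ → ℝ) : Prop :=
  ∀ n, κ n ∈ Ioc 0 1 ∧ gam (ξ n).swap (κ (n + 1)) = κ n

theorem isDualOrbit_const {a : ℕ} {x : ℝ} (hx : x ∈ Ioc 0 1) (hfix : gmap a x = x) :
    IsDualOrbit (fun _ => (a, a)) (fun _ => x) :=
  fun _ => ⟨hx, by simp only [gam, Prod.swap, hfix]⟩

theorem summable_log_one_add_mul_orbitFrom_sub (hA1 : ∀ a ∈ A, 1 ≤ a) (hξ : ∀ n, ξ n ∈ A ×ˢ A)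
    (hκ : ∀ n, κ n ∈ Icc 0 1) (hu : u ∈ baseInterval A) (hv : v ∈ baseInterval A) :
    Summable fun n =>
      Real.log (1 + κ n * orbitFrom ξ u n) - Real.log (1 + κ n * orbitFrom ξ v n) := by
  have h_nonneg {w : ℝ} (hw : w ∈ baseInterval A) (n : ℕ) : 0 ≤ orbitFrom ξ w n :=
    (baseInterval_subset_Ioc (orbitFrom_mem_baseInterval hA1 hξ hw n)).1.le
  have h_geom : Summable fun n => |u - v| * (1 / 4 : ℝ) ^ n :=
    (summable_geometric_of_lt_one (by norm_num) (by norm_num)).mul_left _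
  exact h_geom.of_norm_bounded fun n =>
    (abs_log_one_add_mul_sub_le (hκ n) (h_nonneg hu n) (h_nonneg hv n)).trans
      (abs_orbitFrom_sub_le hA1 hξ hu hv n)

theorem tauA_branchOrbit (hA1 : ∀ a ∈ A, 1 ≤ a) (hξ : ∀ n, ξ n ∈ A ×ˢ A) (hκ : IsDualOrbit ξ κ)
    (hu : u ∈ baseInterval A) (n : ℕ) :
    tauA A (branchOrbit ξ u n) =
      2 * (Real.log (1 + κ n * orbitFrom ξ u n)
          - Real.log (1 + κ (n + 1) * orbitFrom ξ u (n + 1))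
        + Real.log (gamDenom (ξ n).swap (κ (n + 1)))) := by
  have h_mem := orbitFrom_mem_baseInterval hA1 hξ hu n
  rw [branchOrbit_eq_orbitFrom_succ, orbitFrom, tauA_gam hA1 (hξ n) h_mem,
    log_gamDenom _ (baseInterval_subset_Ioc h_mem).1 (hκ (n + 1)).1.1, (hκ n).2]

theorem hasSum_tauA_branchOrbit_sub (hA1 : ∀ a ∈ A, 1 ≤ a) (hξ : ∀ n, ξ n ∈ A ×ˢ A)
    (hκ : IsDualOrbit ξ κ) (hu : u ∈ baseInterval A) (hv : v ∈ baseInterval A) :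
    HasSum (fun n => tauA A (branchOrbit ξ u n) - tauA A (branchOrbit ξ v n))
      (2 * (Real.log (1 + κ 0 * u) - Real.log (1 + κ 0 * v))) := by
  set D : ℕ → ℝ := fun n =>
    Real.log (1 + κ n * orbitFrom ξ u n) - Real.log (1 + κ n * orbitFrom ξ v n) with hD
  have hD_sum : Summable D :=
    summable_log_one_add_mul_orbitFrom_sub hA1 hξ (fun n => Ioc_subset_Icc_self (hκ n).1) hu hv
  have h_term (n : ℕ) : tauA A (branchOrbit ξ u n) - tauA A (branchOrbit ξ v n) =
      2 * (D n - D (n + 1)) := by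
    rw [tauA_branchOrbit hA1 hξ hκ hu, tauA_branchOrbit hA1 hξ hκ hv]
    ring
  have h_telescope : HasSum (fun n => D n - D (n + 1)) (D 0) := by
    have h_shift := (hasSum_nat_add_iff' 1).2 hD_sum.hasSum
    simpa using hD_sum.hasSum.sub h_shift
  simpa only [h_term, hD, orbitFrom] using h_telescope.mul_left 2

theorem hasDerivAt_DeltaFn (hA1 : ∀ a ∈ A, 1 ≤ a) (hξ : ∀ n, ξ n ∈ A ×ˢ A)
    (hκ : IsDualOrbit ξ κ) (hu : u ∈ interior (baseInterval A)) (hv : v ∈ baseInterval A) :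
    HasDerivAt (fun u => DeltaFn A ξ u v) (2 * (κ 0 / (1 + κ 0 * u))) u := by
  have h_formula : (fun w => DeltaFn A ξ w v) =ᶠ[𝓝 u]
      fun w => 2 * (Real.log (1 + κ 0 * w) - Real.log (1 + κ 0 * v)) := by
    filter_upwards [mem_interior_iff_mem_nhds.1 hu] with w hw
    exact (hasSum_tauA_branchOrbit_sub hA1 hξ hκ hw hv).tsum_eq
  have hκ0 : 0 < κ 0 := (hκ 0).1.1
  have hu0 : 0 < u := (baseInterval_subset_Ioc (interior_subset hu)).1
  have h_affine : HasDerivAt (fun w => 1 + κ 0 * w) (κ 0) u := by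
    simpa using ((hasDerivAt_id u).const_mul (κ 0)).const_add 1
  exact (((h_affine.log (by positivity)).sub_const _).const_mul 2).congr_of_eventuallyEq h_formula

theorem hasDerivAt_phiFn (hA1 : ∀ a ∈ A, 1 ≤ a) (hξ : ∀ n, ξ n ∈ A ×ˢ A)
    (hη : ∀ n, η n ∈ A ×ˢ A) (hκ : IsDualOrbit ξ κ) (hμ : IsDualOrbit η μ)
    (hu : u ∈ interior (baseInterval A)) (hv : v ∈ baseInterval A) :
    HasDerivAt (fun u => phiFn A ξ η u v)
      (2 * (κ 0 / (1 + κ 0 * u)) - 2 * (μ 0 / (1 + μ 0 * u))) u :=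
  (hasDerivAt_DeltaFn hA1 hξ hκ hu hv).sub (hasDerivAt_DeltaFn hA1 hη hμ hu hv)

theorem deriv_phiFn_ne_zero (hA1 : ∀ a ∈ A, 1 ≤ a) (hξ : ∀ n, ξ n ∈ A ×ˢ A)
    (hη : ∀ n, η n ∈ A ×ˢ A) (hκ : IsDualOrbit ξ κ) (hμ : IsDualOrbit η μ) (hκμ : κ 0 ≠ μ 0)
    (hu : u ∈ interior (baseInterval A)) (hv : v ∈ baseInterval A) :
    deriv (fun u => phiFn A ξ η u v) u ≠ 0 := by
  have hκ0 : 0 < κ 0 := (hκ 0).1.1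
  have hμ0 : 0 < μ 0 := (hμ 0).1.1
  have hu0 : 0 < u := (baseInterval_subset_Ioc (interior_subset hu)).1
  rw [(hasDerivAt_phiFn hA1 hξ hη hκ hμ hu hv).deriv, sub_ne_zero]
  refine fun h => hκμ ?_
  exact (div_one_add_mul_eq_div_one_add_mul_iff (by positivity) (by positivity)).1
    (mul_left_cancel₀ two_ne_zero h)

end TelescopingSeries

/-- **Non local integrability (NLI) of the distortion function** for the continued
fraction system of a finite alphabet `A` of positive integers with `|A| ≥ 2`: there are
`j₀ ∈ A×A`, sequences `ξ, η : ℕ → A×A` and points `u₀, v₀ ∈ K ∩ I_{j₀}` with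
`∂φ_{ξ,η}/∂u (u₀,v₀) ≠ 0`. -/
theorem distortion_NLI (A : Finset ℕ) (hA : 2 ≤ A.card) (hA1 : ∀ a ∈ A, 1 ≤ a) :
    ∃ j₀ ∈ (A ×ˢ A : Finset (ℕ × ℕ)), ∃ ξ η : ℕ → ℕ × ℕ,
      (∀ n, ξ n ∈ A ×ˢ A) ∧ (∀ n, η n ∈ A ×ˢ A) ∧
      ∃ u₀ v₀ : ℝ, u₀ ∈ KA A ∩ Ij A j₀ ∧ v₀ ∈ KA A ∩ Ij A j₀ ∧
        deriv (fun u => phiFn A ξ η u v₀) u₀ ≠ 0 := by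
  obtain ⟨a, ha, b, hb, hab⟩ := Finset.one_lt_card.1 hA
  obtain ⟨x, hx, hax⟩ := exists_gmap_eq_self hA1 ha
  obtain ⟨y, hy, hby⟩ := exists_gmap_eq_self hA1 hb
  have hx' := baseInterval_subset_Ioc hx
  have hy' := baseInterval_subset_Ioc hy
  have hxy : x ≠ y := by
    rintro rfl
    have h_eq : (a, x) = (b, x) :=
      injOn_uncurry_gmap ⟨trivial, hx'⟩ ⟨trivial, hx'⟩ (hax.trans hby.symm)
    exact hab (congrArg Prod.fst h_eq)
  have haa : (a, a) ∈ A ×ˢ A := Finset.mk_mem_product ha ha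
  have hbb : (b, b) ∈ A ×ˢ A := Finset.mk_mem_product hb hb
  have hfix : gam (a, a) x = x := by simp only [gam, hax]
  have hxK : x ∈ KA A ∩ Ij A (a, a) := ⟨mem_KA_of_gam_eq_self hA1 haa hx hfix, x, hx, hfix⟩
  exact ⟨(a, a), haa, fun _ => (a, a), fun _ => (b, b), fun _ => haa, fun _ => hbb, x, x, hxK, hxK,
    deriv_phiFn_ne_zero hA1 (fun _ => haa) (fun _ => hbb) (isDualOrbit_const hx' hax)
      (isDualOrbit_const hy' hby) hxy
      (mem_interior_baseInterval_of_gmap_eq_self hA1 ha hx hax) hx⟩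
end

section
/- Let A ⊂ ℕ be a finite set with |A| ≥ 2 and for a ∈ A let g_a = [[0,1],[1,a]] ∈ GL₂(ℤ). The matrices g_a freely generate a free semigroup: for any two finite words (a₁,…,a_m) and (b₁,…,b_n) over A, if g_{a₁}g_{a₂}⋯g_{a_m} = g_{b₁}g_{b₂}⋯g_{b_n} then m = n and a_i = b_i for all i. -/
/-- The 2×2 integer matrix `g_a = [[0,1],[1,a]]` (an element of `GL₂(ℤ)`, det = −1). -/
def gMat (a : ℕ) : Matrix (Fin 2) (Fin 2) ℤ := !![0, 1; 1, (a : ℤ)]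

/-!
The matrix `g_a` sends `(p, q)` to `(q, p + a q)`. When `0 < p < q` and `1 ≤ a`, the image
`(p', q')` again satisfies `0 < p' < q'`, and `q' = a p' + p` is the Euclidean division of `q'`
by `p'`, so its quotient and remainder recover the letter `a` and the vector `(p, q)`.
Decoding in this way a vector obtained from `(1, 2)` also detects where the word ends: `(1, 2)`
is not itself such an image, as `q = 1` leaves no room for `p`. Hence a word over the positive
integers is determined by the vector to which its product sends `(1, 2)`, and a fortiori by its
product.
-/

open Set

section MulAction

variable {α M X : Type*} [Monoid M] [MulAction M X] {g : α → M} {A : Set α} {S : Set X}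

theorem prod_map_smul_mem (hS : ∀ a ∈ A, MapsTo (g a • ·) S S) {x : X} (hx : x ∈ S) {l : List α}
    (hl : ∀ a ∈ l, a ∈ A) : (l.map g).prod • x ∈ S := by
  induction l with
  | nil => simpa
  | cons a l ih =>
    obtain ⟨ha, hl⟩ := List.forall_mem_cons.1 hl
    simpa [mul_smul] using hS a ha (ih hl)

/-- A ping-pong argument: injectivity of the joint action on `A ×ˢ S` strips off the first letters
of two words, and `x` lying outside the image prevents one word from ending before the other. -/
theorem injOn_prod_map_smul (hS : ∀ a ∈ A, MapsTo (g a • ·) S S)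
    (hinj : InjOn (fun p : α × X ↦ g p.1 • p.2) (A ×ˢ S)) {x : X} (hx : x ∈ S)
    (hne : ∀ a ∈ A, ∀ y ∈ S, g a • y ≠ x) :
    InjOn (fun l : List α ↦ (l.map g).prod • x) {l | ∀ a ∈ l, a ∈ A} := by
  intro l
  induction l with
  | nil =>
    rintro - (_ | ⟨b, m⟩) hm h
    · rfl
    · obtain ⟨hb, hm⟩ := List.forall_mem_cons.1 hm
      refine absurd ?_ (hne b hb _ (prod_map_smul_mem hS hx hm))
      simpa [mul_smul] using h.symm
  | cons a l ih =>
    intro hl m hm h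
    obtain ⟨ha, hl'⟩ := List.forall_mem_cons.1 hl
    rcases m with _ | ⟨b, m⟩
    · refine absurd ?_ (hne a ha _ (prod_map_smul_mem hS hx hl'))
      simpa [mul_smul] using h
    · obtain ⟨hb, hm'⟩ := List.forall_mem_cons.1 hm
      have hheads : g a • (l.map g).prod • x = g b • (m.map g).prod • x := by
        simpa [mul_smul] using h
      obtain ⟨rfl, htails⟩ := Prod.mk.inj <| hinj
        (mk_mem_prod ha (prod_map_smul_mem hS hx hl'))
        (mk_mem_prod hb (prod_map_smul_mem hS hx hm')) hheads
      rw [ih hl' hm' htails]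

end MulAction

/-- The integer vectors `(p, q)` with `0 < p < q`, which stand for the fractions `p / q` in the
open unit interval: on these, `gMat a` acts as the continued fraction step `x ↦ 1 / (a + x)`. -/
def properFractions : Set (Fin 2 → ℤ) := {v | 0 < v 0 ∧ v 0 < v 1}

theorem gMat_smul_apply_zero (a : ℕ) (v : Fin 2 → ℤ) : (gMat a • v) 0 = v 1 := by
  simp [gMat, -Matrix.cons_mulVec]

theorem gMat_smul_apply_one (a : ℕ) (v : Fin 2 → ℤ) : (gMat a • v) 1 = v 0 + a * v 1 := by
  simp [gMat, -Matrix.cons_mulVec]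

theorem mapsTo_gMat_smul_properFractions {a : ℕ} (ha : 1 ≤ a) :
    MapsTo (gMat a • ·) properFractions properFractions := by
  rintro v ⟨hpos, hlt⟩
  have hden : 0 < v 1 := hpos.trans hlt
  simp only [properFractions, mem_ofPred_eq, gMat_smul_apply_zero, gMat_smul_apply_one]
  refine ⟨hden, ?_⟩
  calc v 1 ≤ a * v 1 := le_mul_of_one_le_left hden.le (mod_cast ha)
    _ < v 0 + a * v 1 := lt_add_of_pos_left _ hpos

theorem gMat_smul_ediv_eq_and_emod_eq (a : ℕ) {v : Fin 2 → ℤ} (hv : v ∈ properFractions) :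
    (gMat a • v) 1 / (gMat a • v) 0 = a ∧ (gMat a • v) 1 % (gMat a • v) 0 = v 0 := by
  obtain ⟨hpos, hlt⟩ := hv
  rw [gMat_smul_apply_zero, gMat_smul_apply_one]
  exact (Int.ediv_emod_unique (hpos.trans hlt)).2 ⟨by simp [mul_comm], hpos.le, hlt⟩

theorem injOn_gMat_smul_properFractions :
    InjOn (fun p : ℕ × (Fin 2 → ℤ) ↦ gMat p.1 • p.2) (univ ×ˢ properFractions) := by
  rintro ⟨a, v⟩ ⟨-, hv⟩ ⟨b, w⟩ ⟨-, hw⟩ (h : gMat a • v = gMat b • w)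
  obtain ⟨hquot_v, hrem_v⟩ := gMat_smul_ediv_eq_and_emod_eq a hv
  obtain ⟨hquot_w, hrem_w⟩ := gMat_smul_ediv_eq_and_emod_eq b hw
  have hletter : a = b := by exact_mod_cast hquot_v.symm.trans (h ▸ hquot_w)
  have hnum : v 0 = w 0 := hrem_v.symm.trans (h ▸ hrem_w)
  have hden : v 1 = w 1 := by rw [← gMat_smul_apply_zero a v, h, gMat_smul_apply_zero]
  have hvec : v = w := by
    ext i
    fin_cases i
    exacts [hnum, hden]
  rw [hletter, hvec]

theorem gMat_smul_ne_one_two (a : ℕ) {v : Fin 2 → ℤ} (hv : v ∈ properFractions) :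
    gMat a • v ≠ ![1, 2] := by
  intro h
  have hden : v 1 = 1 := by rw [← gMat_smul_apply_zero a v, h, Matrix.cons_val_zero]
  obtain ⟨hpos, hlt⟩ := hv
  lia

theorem injOn_prod_map_gMat_smul :
    InjOn (fun l : List ℕ ↦ (l.map gMat).prod • (![1, 2] : Fin 2 → ℤ)) {l | ∀ a ∈ l, 1 ≤ a} :=
  injOn_prod_map_smul (g := gMat) (A := {a | 1 ≤ a}) (S := properFractions)
    (fun _ ha ↦ mapsTo_gMat_smul_properFractions ha)
    (injOn_gMat_smul_properFractions.mono (prod_mono_left (subset_univ _)))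
    (by simp [properFractions])
    (fun a _ _ hv ↦ gMat_smul_ne_one_two a hv)

theorem gMat_freely_generates_general {l₁ l₂ : List ℕ} (h₁ : ∀ a ∈ l₁, 1 ≤ a)
    (h₂ : ∀ a ∈ l₂, 1 ≤ a) (hprod : (l₁.map gMat).prod = (l₂.map gMat).prod) : l₁ = l₂ :=
  injOn_prod_map_gMat_smul h₁ h₂ (congrArg (· • (![1, 2] : Fin 2 → ℤ)) hprod)

/-- **Free generation.** For a finite alphabet `A ⊂ ℕ` (of positive integers) with `|A| ≥ 2`,
the matrices `g_a`, `a ∈ A`, freely generate a free semigroup: if two finite words over `A`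
evaluate to the same product of the matrices `g_a`, then the words coincide
(in particular they have the same length and the same letters). -/
theorem gMat_freely_generates (A : Finset ℕ) (hA : 2 ≤ A.card) (hA1 : ∀ a ∈ A, 1 ≤ a)
    (l₁ l₂ : List ℕ) (h₁ : ∀ a ∈ l₁, a ∈ A) (h₂ : ∀ a ∈ l₂, a ∈ A)
    (hprod : (l₁.map gMat).prod = (l₂.map gMat).prod) : l₁ = l₂ :=
  gMat_freely_generates_general (fun a ha ↦ hA1 a (h₁ a ha)) (fun a ha ↦ hA1 a (h₂ a ha)) hprod
end

section
/- Let A ⊂ ℕ be a finite alphabet with |A| ≥ 2 and let Γ_A ⊂ SL₂(ℤ) be the semigroup generated by the matrices g_a g_{a'} for a, a' ∈ A, where g_a = [[0,1],[1,a]]. Then every element of Γ_A (i.e., every nonempty product of the generators) has trace strictly greater than 2. -/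
/-- `SL₂(ℤ)`. -/
abbrev SL2Z := Matrix.SpecialLinearGroup (Fin 2) ℤ

/-- The element `g_a g_{a'} = [[0,1],[1,a]]·[[0,1],[1,a']] = [[1,a'],[a,aa'+1]]` of `SL₂(ℤ)`. -/
def gPair (a a' : ℕ) : SL2Z :=
  ⟨!![1, (a' : ℤ); (a : ℤ), (a : ℤ) * (a' : ℤ) + 1], by
    simp [Matrix.det_fin_two_of]; ring⟩

/-- The generating set `S_A = {g_a g_{a'} : a, a' ∈ A}` of the semigroup `Γ_A`. -/
def gensSet (A : Finset ℕ) : Set SL2Z := {g | ∃ a ∈ A, ∃ a' ∈ A, g = gPair a a'}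

/-- The semigroup `Γ_A ⊂ SL₂(ℤ)`: all nonempty products of the generators `g_a g_{a'}`. -/
def GammaA (A : Finset ℕ) : Set SL2Z :=
  {g | ∃ l : List SL2Z, l ≠ [] ∧ (∀ x ∈ l, x ∈ gensSet A) ∧ l.prod = g}

/-- Reduction modulo `q`, `SL₂(ℤ) →* SL₂(ℤ/qℤ)`. -/
def modq (q : ℕ) : SL2Z →* Matrix.SpecialLinearGroup (Fin 2) (ZMod q) :=
  Matrix.SpecialLinearGroup.map (Int.castRingHom (ZMod q))

/-!
Each generator dominates the identity matrix entrywise, and multiplying a nonnegative matrix by a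
matrix that dominates the identity can only increase its entries. So the trace of a product of
generators is at least that of its first factor `g_a g_{a'}`, which is `a a' + 2 > 2`.
-/

section EntrywiseOrder

variable {m n R : Type*} [Fintype n] [DecidableEq n] [Semiring R] [PartialOrder R]
  [IsOrderedRing R]

theorem apply_le_mul_apply_of_one_le {M : Matrix m n R} {N : Matrix n n R}
    (hM : ∀ i j, 0 ≤ M i j) (hN : ∀ i j, (1 : Matrix n n R) i j ≤ N i j) (i : m) (j : n) :
    M i j ≤ (M * N) i j :=
  calc
    M i j = (M * (1 : Matrix n n R)) i j := by rw [Matrix.mul_one]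
    _ = ∑ k, M i k * (1 : Matrix n n R) k j := Matrix.mul_apply
    _ ≤ ∑ k, M i k * N k j :=
      Finset.sum_le_sum fun k _ ↦ mul_le_mul_of_nonneg_left (hN k j) (hM i k)
    _ = (M * N) i j := Matrix.mul_apply.symm

variable (n R) in
/-- The monoid of square matrices that are at least the identity matrix in the entrywise order.
The order is spelled out because the order on matrices in Mathlib is the Loewner order. -/
def entrywiseGEOne : Submonoid (Matrix n n R) where
  carrier := {M | ∀ i j, (1 : Matrix n n R) i j ≤ M i j}
  one_mem' _ _ := le_rfl
  mul_mem' hM hN i j :=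
    (hM i j).trans <|
      apply_le_mul_apply_of_one_le (fun k l ↦ (Matrix.zero_le_one_elem k l).trans (hM k l)) hN i j

theorem trace_le_trace_mul_of_mem_entrywiseGEOne {M N : Matrix n n R}
    (hM : ∀ i j, 0 ≤ M i j) (hN : N ∈ entrywiseGEOne n R) : M.trace ≤ (M * N).trace :=
  Finset.sum_le_sum fun i _ ↦ apply_le_mul_apply_of_one_le hM hN i i

theorem nonneg_of_mem_entrywiseGEOne {M : Matrix n n R} (hM : M ∈ entrywiseGEOne n R) (i j : n) :
    0 ≤ M i j :=
  (Matrix.zero_le_one_elem i j).trans (hM i j)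

end EntrywiseOrder

theorem gPair_mem_entrywiseGEOne (a a' : ℕ) : (gPair a a').val ∈ entrywiseGEOne (Fin 2) ℤ := by
  have letters_mul_nonneg : (0 : ℤ) ≤ a * a' := by positivity
  intro i j
  fin_cases i <;> fin_cases j <;> simp [gPair, letters_mul_nonneg]

theorem trace_gPair (a a' : ℕ) : (gPair a a').val.trace = a * a' + 2 := by
  rw [gPair, Matrix.trace_fin_two_of]
  ring

theorem GammaA_subset_closure (A : Finset ℕ) :
    GammaA A ⊆ Subsemigroup.closure (Set.image2 gPair A A) := by
  rintro _ ⟨l, hl, hgens, rfl⟩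
  refine List.prod_induction_nonempty (· ∈ Subsemigroup.closure (Set.image2 gPair A A))
    (fun _ _ ↦ mul_mem) hl fun g hg ↦ ?_
  obtain ⟨a, ha, a', ha', rfl⟩ := hgens g hg
  exact Subsemigroup.subset_closure (Set.mem_image2_of_mem ha ha')

theorem GammaA_trace_gt_two_general (A : Set ℕ) (hA : ∀ a ∈ A, 1 ≤ a) {γ : SL2Z}
    (hγ : γ ∈ Subsemigroup.closure (Set.image2 gPair A A)) : 2 < γ.val.trace := by
  suffices γ.val ∈ entrywiseGEOne (Fin 2) ℤ ∧ 2 < γ.val.trace from this.2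
  induction hγ using Subsemigroup.closure_induction with
  | mem g hg =>
    obtain ⟨a, ha, a', ha', rfl⟩ := hg
    have letters_mul_pos : (0 : ℤ) < a * a' := mod_cast Nat.mul_pos (hA a ha) (hA a' ha')
    exact ⟨gPair_mem_entrywiseGEOne a a', by rw [trace_gPair]; linarith⟩
  | mul g h _ _ hg hh =>
    rw [Matrix.SpecialLinearGroup.coe_mul]
    exact ⟨mul_mem hg.1 hh.1, hg.2.trans_le <|
      trace_le_trace_mul_of_mem_entrywiseGEOne (nonneg_of_mem_entrywiseGEOne hg.1) hh.1⟩

/-- **Traces in `Γ_A` exceed 2.** Every element of the semigroup `Γ_A` generated by the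
matrices `g_a g_{a'}` (`a, a' ∈ A`, `A` a finite alphabet of positive integers with `|A| ≥ 2`)
has trace strictly greater than `2`. -/
theorem GammaA_trace_gt_two (A : Finset ℕ) (hA : 2 ≤ A.card) (hA1 : ∀ a ∈ A, 1 ≤ a)
    (γ : SL2Z) (hγ : γ ∈ GammaA A) : 2 < γ.val.trace :=
  GammaA_trace_gt_two_general A hA1 (GammaA_subset_closure A hγ)
end

section
/- Let A ⊂ ℕ be a finite alphabet with |A| ≥ 2 and let Γ_A ⊂ SL₂(ℤ) be the semigroup generated by the matrices g_a g_{a'} for a, a' ∈ A, where g_a = [[0,1],[1,a]]. If γ₁, γ₂ ∈ Γ_A satisfy |tr(γ₁γ₂γ₁γ₂)| = |tr(γ₁²γ₂²)|, then tr(γ₁γ₂γ₁⁻¹γ₂⁻¹) = 2, i.e., the commutator of γ₁ and γ₂ is parabolic or the identity. -/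
/-!
Since a `2 × 2` matrix satisfies `B + adjugate B = tr B • 1`, we have
`tr (A * B) + tr (A * B⁻¹) = tr A * tr B` in `SL₂`. Apply this to `A = g * h` and `B = h * g`, which
have the same trace `t`: as `A * B⁻¹` is the commutator of `g` and `h`, and `A * B` has the trace of
`g² * h²`, the commutator has trace `t² - tr (g² * h²)`. Apply it also to `A = B = g * h`:
`t² = tr (g * h * g * h) + 2`. Hence the commutator has trace `2` exactly when
`tr (g * h * g * h) = tr (g² * h²)`, and for matrices with nonnegative entries the absolute values
in the hypothesis change nothing.
-/

section TraceIdentities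

variable {R : Type*} [CommRing R]

theorem add_adjugate_fin_two (B : Matrix (Fin 2) (Fin 2) R) :
    B + B.adjugate = B.trace • 1 := by
  ext i j
  fin_cases i <;> fin_cases j <;> simp [Matrix.adjugate_fin_two, Matrix.trace_fin_two, add_comm]

theorem trace_mul_add_trace_mul_adjugate (A B : Matrix (Fin 2) (Fin 2) R) :
    (A * B).trace + (A * B.adjugate).trace = A.trace * B.trace := by
  rw [← Matrix.trace_add, ← mul_add, add_adjugate_fin_two, Matrix.mul_smul, mul_one,
    Matrix.trace_smul, smul_eq_mul, mul_comm]

theorem trace_mul_add_trace_mul_inv (g h : Matrix.SpecialLinearGroup (Fin 2) R) :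
    (g * h).val.trace + (g * h⁻¹).val.trace = g.val.trace * h.val.trace :=
  trace_mul_add_trace_mul_adjugate g.val h.val

theorem trace_mul_self_add_two (g : Matrix.SpecialLinearGroup (Fin 2) R) :
    (g * g).val.trace + 2 = g.val.trace * g.val.trace := by
  simpa using trace_mul_add_trace_mul_inv g g

theorem trace_commutator_add_trace_sq_mul_sq (g h : Matrix.SpecialLinearGroup (Fin 2) R) :
    (g * h * g⁻¹ * h⁻¹).val.trace + (g ^ 2 * h ^ 2).val.trace =
      (g * h * g * h).val.trace + 2 := by
  have trace_swap : (h * g).val.trace = (g * h).val.trace := Matrix.trace_mul_comm h.val g.val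
  have trace_cyclic : (g ^ 2 * h ^ 2).val.trace = (g * h * (h * g)).val.trace := calc
    (g ^ 2 * h ^ 2).val.trace = (g * (g * h * h)).val.trace := by simp only [pow_two, mul_assoc]
    _ = (g * h * h * g).val.trace := Matrix.trace_mul_comm g.val (g * h * h).val
    _ = (g * h * (h * g)).val.trace := by rw [mul_assoc (g * h)]
  calc (g * h * g⁻¹ * h⁻¹).val.trace + (g ^ 2 * h ^ 2).val.trace
      = (g * h * (h * g)).val.trace + (g * h * (h * g)⁻¹).val.trace := by
        rw [trace_cyclic, mul_inv_rev, ← mul_assoc (g * h) g⁻¹, add_comm]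
    _ = (g * h).val.trace * (g * h).val.trace := by rw [trace_mul_add_trace_mul_inv, trace_swap]
    _ = (g * h * g * h).val.trace + 2 := by rw [← trace_mul_self_add_two, ← mul_assoc (g * h) g]

end TraceIdentities

/-- The multiplicative monoid of square matrices with nonnegative entries, to which the matrices
of `Γ_A` belong. -/
def nonnegMatrices (n R : Type*) [Fintype n] [DecidableEq n] [Semiring R] [PartialOrder R]
    [IsOrderedRing R] : Submonoid (Matrix n n R) where
  carrier := {M | ∀ i j, 0 ≤ M i j}
  mul_mem' hM hN i j := Finset.sum_nonneg fun k _ => mul_nonneg (hM i k) (hN k j)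
  one_mem' := Matrix.zero_le_one_elem

theorem trace_nonneg_of_mem_nonnegMatrices {n R : Type*} [Fintype n] [DecidableEq n]
    [Semiring R] [PartialOrder R] [IsOrderedRing R] {M : Matrix n n R}
    (hM : M ∈ nonnegMatrices n R) : 0 ≤ M.trace :=
  Finset.sum_nonneg fun i _ => hM i i

theorem val_gPair_mem_nonnegMatrices (a a' : ℕ) : (gPair a a').val ∈ nonnegMatrices (Fin 2) ℤ := by
  have corner_nonneg : (0 : ℤ) ≤ a * a' + 1 := by positivity
  intro i j
  fin_cases i <;> fin_cases j <;> simp [gPair, corner_nonneg]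

theorem val_mem_nonnegMatrices_of_mem_GammaA {A : Finset ℕ} {γ : SL2Z} (hγ : γ ∈ GammaA A) :
    γ.val ∈ nonnegMatrices (Fin 2) ℤ := by
  obtain ⟨l, -, hl, rfl⟩ := hγ
  refine Submonoid.list_prod_mem
    ((nonnegMatrices (Fin 2) ℤ).comap Matrix.SpecialLinearGroup.coeMonoidHom) fun x hx => ?_
  obtain ⟨a, -, a', -, rfl⟩ := hl x hx
  exact val_gPair_mem_nonnegMatrices a a'

theorem GammaA_equal_traces_implies_parabolic_commutator_general
    {R : Type*} [CommRing R] [Lattice R] [IsOrderedRing R]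
    {γ₁ γ₂ : Matrix.SpecialLinearGroup (Fin 2) R}
    (h₁ : γ₁.val ∈ nonnegMatrices (Fin 2) R) (h₂ : γ₂.val ∈ nonnegMatrices (Fin 2) R)
    (htr : |(γ₁ * γ₂ * γ₁ * γ₂).val.trace| = |(γ₁ ^ 2 * γ₂ ^ 2).val.trace|) :
    (γ₁ * γ₂ * γ₁⁻¹ * γ₂⁻¹).val.trace = 2 := by
  have alternating_nonneg : 0 ≤ (γ₁ * γ₂ * γ₁ * γ₂).val.trace :=
    trace_nonneg_of_mem_nonnegMatrices (mul_mem (mul_mem (mul_mem h₁ h₂) h₁) h₂)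
  have squares_nonneg : 0 ≤ (γ₁ ^ 2 * γ₂ ^ 2).val.trace :=
    trace_nonneg_of_mem_nonnegMatrices (mul_mem (pow_mem h₁ 2) (pow_mem h₂ 2))
  rw [abs_of_nonneg alternating_nonneg, abs_of_nonneg squares_nonneg] at htr
  linear_combination trace_commutator_add_trace_sq_mul_sq γ₁ γ₂ + htr

/-- If `γ₁, γ₂ ∈ Γ_A` satisfy `|tr(γ₁γ₂γ₁γ₂)| = |tr(γ₁²γ₂²)|`, then the commutator
`γ₁γ₂γ₁⁻¹γ₂⁻¹` has trace `2`, i.e. it is parabolic or the identity. -/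
theorem GammaA_equal_traces_implies_parabolic_commutator
    (A : Finset ℕ) (hA : 2 ≤ A.card) (hA1 : ∀ a ∈ A, 1 ≤ a)
    (γ₁ γ₂ : SL2Z) (h₁ : γ₁ ∈ GammaA A) (h₂ : γ₂ ∈ GammaA A)
    (htr : |(γ₁ * γ₂ * γ₁ * γ₂).val.trace| = |(γ₁ ^ 2 * γ₂ ^ 2).val.trace|) :
    (γ₁ * γ₂ * γ₁⁻¹ * γ₂⁻¹).val.trace = 2 :=
  GammaA_equal_traces_implies_parabolic_commutator_general
    (val_mem_nonnegMatrices_of_mem_GammaA h₁) (val_mem_nonnegMatrices_of_mem_GammaA h₂) htr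
end
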